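/- Let p ≥ 1. Suppose that for each index i ∈ {1,…,p} we are given functions fᵢ assigning to every real p×p SPD matrix a vector in ℝ^{p−1} and gᵢ assigning to every real p×p SPD matrix a strictly positive real number. Starting from any SPD matrix Θ₀, define Θᵢ from Θ_{i−1} by replacing the off-diagonal entries of the i-th row and column of Θ_{i−1} with u = fᵢ(Θ_{i−1}) and its i-th diagonal entry with gᵢ(Θ_{i−1}) + uᵀ Mᵢ⁻¹ u, where Mᵢ is Θ_{i−1} with its i-th row and column deleted. Then every iterate Θ₁, …, Θ_p is symmetric positive-definite; in particular, the output Θ_p of one full SpodNet layer is SPD. -/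

import Mathlib

open Matrix

/-- The SpodNet column-row/diagonal update at index `i`: replace the off-diagonal
entries of the `i`-th row and column of `Θ` by `u` (symmetrically), and the
`(i,i)` entry by `v + uᵀ M⁻¹ u`, where `M` is `Θ` with its `i`-th row and column
deleted. All other entries are unchanged. -/
noncomputable def spodUpdate {n : ℕ} (i : Fin (n + 1)) (u : Fin n → ℝ) (v : ℝ)
    (Θ : Matrix (Fin (n + 1)) (Fin (n + 1)) ℝ) :
    Matrix (Fin (n + 1)) (Fin (n + 1)) ℝ :=
  Matrix.of fun j k =>
    if hj : j = i then
      if hk : k = i then v + u ⬝ᵥ (Θ.submatrix i.succAbove i.succAbove)⁻¹ *ᵥ u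
      else u ((finSuccAboveEquiv i).symm ⟨k, hk⟩)
    else
      if hk : k = i then u ((finSuccAboveEquiv i).symm ⟨j, hj⟩)
      else Θ j k

theorem spodUpdate_posDef {n : ℕ} (i : Fin (n + 1)) (u : Fin n → ℝ) (v : ℝ)
    (Θ : Matrix (Fin (n + 1)) (Fin (n + 1)) ℝ) (hΘ : Θ.PosDef) (hv : 0 < v) :
    (spodUpdate i u v Θ).PosDef := by
  have hM : (Θ.submatrix i.succAbove i.succAbove).PosDef :=
    hΘ.submatrix i.succAbove_right_injective
  have hsym : ∀ j k, Θ j k = Θ k j := fun j k => by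
    simpa using hΘ.isHermitian.apply k j
  have hidx : ∀ (k : Fin n) (hk : i.succAbove k ≠ i),
      (finSuccAboveEquiv i).symm ⟨i.succAbove k, hk⟩ = k := by
    intro k hk
    rw [Equiv.symm_apply_eq]
    rfl
  have e1 : spodUpdate i u v Θ i i =
      v + u ⬝ᵥ (Θ.submatrix i.succAbove i.succAbove)⁻¹ *ᵥ u := by
    simp [spodUpdate]
  have e2 : ∀ k, spodUpdate i u v Θ i (i.succAbove k) = u k := by
    intro k
    simp [spodUpdate, Fin.succAbove_ne, hidx]
  have e3 : ∀ k, spodUpdate i u v Θ (i.succAbove k) i = u k := by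
    intro k
    simp [spodUpdate, Fin.succAbove_ne, hidx]
  have e4 : ∀ j k, spodUpdate i u v Θ (i.succAbove j) (i.succAbove k) =
      Θ.submatrix i.succAbove i.succAbove j k := by
    intro j k
    simp [spodUpdate, Fin.succAbove_ne]
  generalize Θ.submatrix i.succAbove i.succAbove = M at hM e1 e4
  generalize hw : M⁻¹ *ᵥ u = w at e1
  have hMw : M *ᵥ w = u := by
    rw [← hw, mulVec_mulVec, Matrix.mul_nonsing_inv _ ((Matrix.isUnit_iff_isUnit_det _).1 hM.isUnit),
      one_mulVec]
  have hMT : Mᵀ = M := by simpa [Matrix.IsHermitian] using hM.isHermitian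
  refine PosDef.of_dotProduct_mulVec_pos ?_ ?_
  · ext j k
    simp only [conjTranspose_apply, star_trivial, spodUpdate, of_apply]
    split_ifs <;> first | rfl | exact hsym _ _
  · intro x hx
    obtain ⟨a, ha⟩ : ∃ a, x i = a := ⟨_, rfl⟩
    obtain ⟨y, hy⟩ : ∃ y : Fin n → ℝ, ∀ k, x (i.succAbove k) = y k := ⟨_, fun _ => rfl⟩
    have key : star x ⬝ᵥ (spodUpdate i u v Θ *ᵥ x) =
        v * a ^ 2 + (y + a • w) ⬝ᵥ (M *ᵥ (y + a • w)) := by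
      have h1 : star x ⬝ᵥ (spodUpdate i u v Θ *ᵥ x) =
          a * ((v + u ⬝ᵥ w) * a + u ⬝ᵥ y) + y ⬝ᵥ (a • u + M *ᵥ y) := by
        simp only [dotProduct, mulVec, Fin.sum_univ_succAbove _ i, e1, e2, e3, e4, ha, hy,
          star_trivial, Pi.add_apply, Pi.smul_apply, smul_eq_mul, mul_comm a]
      have h2 : w ⬝ᵥ (M *ᵥ y) = u ⬝ᵥ y := by
        rw [dotProduct_mulVec, ← mulVec_transpose, hMT, hMw]
      rw [h1, mulVec_add, mulVec_smul, hMw]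
      simp only [add_dotProduct, dotProduct_add, smul_dotProduct, dotProduct_smul, smul_eq_mul, h2]
      rw [dotProduct_comm w u, dotProduct_comm y u]
      ring
    rw [key]
    have hnn : ∀ z, 0 ≤ z ⬝ᵥ (M *ᵥ z) := fun z => by
      simpa using hM.posSemidef.dotProduct_mulVec_nonneg z
    by_cases h : a = 0
    · have hyne : y ≠ 0 := by
        rintro rfl
        apply hx
        ext j
        rcases Fin.eq_self_or_eq_succAbove i j with rfl | ⟨k, rfl⟩
        · simp [ha, h]
        · simp [hy]
      have := hM.dotProduct_mulVec_pos hyne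
      simpa [h] using this
    · have := hnn (y + a • w)
      positivity

/-- **One full SpodNet layer preserves positive-definiteness.**
Given, for each index `i`, a column-update function `f i` and a diagonal-update
function `g i` which is strictly positive on SPD matrices, the sequence starting
from an SPD matrix `Θ₀` and performing the SpodNet update at index `i` with
`u = f i Θ` and `v = g i Θ` at step `i` consists of SPD matrices only; in
particular the output of the layer (after all `n + 1` updates) is SPD. -/
theorem spodnet_layer_posDef (n : ℕ)
    (f : Fin (n + 1) → Matrix (Fin (n + 1)) (Fin (n + 1)) ℝ → (Fin n → ℝ))
    (g : Fin (n + 1) → Matrix (Fin (n + 1)) (Fin (n + 1)) ℝ → ℝ)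
    (hg : ∀ i Θ, Θ.PosDef → 0 < g i Θ)
    (Θseq : ℕ → Matrix (Fin (n + 1)) (Fin (n + 1)) ℝ)
    (h0 : (Θseq 0).PosDef)
    (hstep : ∀ k (hk : k < n + 1),
      Θseq (k + 1) =
        spodUpdate ⟨k, hk⟩ (f ⟨k, hk⟩ (Θseq k)) (g ⟨k, hk⟩ (Θseq k)) (Θseq k)) :
    ∀ k ≤ n + 1, (Θseq k).PosDef := by
  intro k
  induction k with
  | zero => exact fun _ => h0
  | succ k ih =>
    intro hk
    have hp := ih (by omega)
    rw [hstep k (by omega)]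
    exact spodUpdate_posDef _ _ _ _ hp (hg _ _ hp)
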